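/- arXiv:1110.4523 — 2 statements merged into one kernel-verified Lean document; each statement's English description precedes it below -/
import Mathlib

section
/- Let G = (V ∪ {s}, E) be a finite sandpile graph, let W ⊆ V be nonempty with the induced subgraph of G on (V ∪ {s}) \ W connected, and let ξ be a minimal configuration on W. Then ν_G[η : η_W = ξ] = ν_G[E_{V,W}] · |R_{G_W}|^{-1}; equivalently, |R_{G_W}| · #{η ∈ R_G : η_W = ξ} = #{η ∈ R_G : η ∈ E_{V,W}}. -/
open scoped Classical

namespace Sandpile

/-- A finite sandpile multigraph on vertex set `α` (which plays the role of `V ∪ {s}`),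
given by a distinguished sink and symmetric edge multiplicities. -/
structure Graph (α : Type*) where
  sink : α
  b : α → α → ℕ

namespace Graph

variable {α : Type*} [Fintype α] [DecidableEq α] (G : Graph α)

/-- The non-sink vertices (the set `V`). -/
def VSet : Finset α := Finset.univ.erase G.sink

/-- Degree restricted to a finite set of vertices: `deg_F(x) = ∑_{y ∈ F} b_{xy}`. -/
def degIn (F : Finset α) (x : α) : ℕ := ∑ y ∈ F, G.b x y

/-- Total degree `deg_G(x)`. -/
def deg (x : α) : ℕ := ∑ y, G.b x y

/-- `G` is a genuine finite sandpile graph: symmetric multiplicities, no loops, connected. -/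
def IsSandpileGraph : Prop :=
  (∀ x y, G.b x y = G.b y x) ∧ (∀ x, G.b x x = 0) ∧
    ∀ x y : α, Relation.ReflTransGen (fun u v => 0 < G.b u v) x y

/-- Connectivity of the subgraph induced on the vertex set `S`. -/
def ConnectedOn (S : Set α) : Prop :=
  ∀ x ∈ S, ∀ y ∈ S,
    Relation.ReflTransGen (fun u v => u ∈ S ∧ v ∈ S ∧ 0 < G.b u v) x y

/-- A sandpile is stable if every non-sink vertex carries fewer particles than its degree. -/
def Stable (η : α → ℕ) : Prop := ∀ x ∈ G.VSet, η x < G.deg x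

/-- `η` is ample for `F` if some vertex of `F` has at least `deg_F` particles. -/
def AmpleFor (η : α → ℕ) (F : Finset α) : Prop := ∃ x ∈ F, G.degIn F x ≤ η x

/-- Dhar's burning test: recurrent = stable and ample for every nonempty `F ⊆ V`. -/
def Recurrent (η : α → ℕ) : Prop :=
  G.Stable η ∧ ∀ F ⊆ G.VSet, F.Nonempty → G.AmpleFor η F

/-- Remove one particle at `w` (`η - δ_w`). -/
def SubOne (η : α → ℕ) (w : α) : α → ℕ := fun x => if x = w then η x - 1 else η x

/-- `η` and `ξ` agree on `W` (restriction `η_W = ξ_W`). -/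
def EqOn (η ξ : α → ℕ) (W : Finset α) : Prop := ∀ x ∈ W, η x = ξ x

/-- `ξ` is (generalized) minimal on `W`: it extends to a recurrent sandpile, and no
recurrent extension stays recurrent after removing a particle from a vertex of `W`.
(`η - δ_w ∉ R_G` holds automatically if `η w = 0`, as then `η - δ_w` is not a configuration.) -/
def Minimal (W : Finset α) (ξ : α → ℕ) : Prop :=
  (∃ η, G.Recurrent η ∧ EqOn η ξ W) ∧
    ∀ η, G.Recurrent η → EqOn η ξ W → ∀ w ∈ W, ¬(1 ≤ η w ∧ G.Recurrent (SubOne η w))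

/-- `ν_G[P]`: the uniform probability of the event `P` under the uniform measure on
recurrent configurations (configurations are normalized to vanish at the sink). -/
noncomputable def prob (P : (α → ℕ) → Prop) : ℝ :=
  (Nat.card {η : α → ℕ // η G.sink = 0 ∧ G.Recurrent η ∧ P η} : ℝ) /
    (Nat.card {η : α → ℕ // η G.sink = 0 ∧ G.Recurrent η} : ℝ)

/-- The graph Laplacian with the sink row and column deleted. -/
noncomputable def lapRed :
    Matrix {x : α // x ≠ G.sink} {x : α // x ≠ G.sink} ℝ :=
  Matrix.of fun x y =>
    if (x : α) = (y : α) then (G.deg ↑x : ℝ) else -(G.b ↑x ↑y : ℝ)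

/-- `H = (Δ')⁻¹`, extended by `0` on the sink. -/
noncomputable def Hfun (x y : α) : ℝ :=
  if hx : x = G.sink then 0
  else if hy : y = G.sink then 0
  else (G.lapRed)⁻¹ ⟨x, hx⟩ ⟨y, hy⟩

/-- Oriented edges of the multigraph `G`: an edge from `p.1` to `p.2.1`, with copy
index `p.2.2` (parallel edges are distinct). -/
abbrev OEdge (G : Graph α) : Type _ := {p : α × α × ℕ // p.2.2 < G.b p.1 p.2.1}

/-- `K_G(e,f) = δ_{ef} - Y_G(e,f)` where `Y_G` is the transfer current matrix. -/
noncomputable def Kmat (e f : G.OEdge) : ℝ :=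
  (if e = f then 1 else 0) -
    (G.Hfun e.1.1 f.1.1 - G.Hfun e.1.1 f.1.2.1 - G.Hfun e.1.2.1 f.1.1 +
      G.Hfun e.1.2.1 f.1.2.1)

/-- Unburnt sets of phase one of the burning algorithm based on `Q`:
`U_0 = V`, `U_i = U_{i-1} \ B_i` with `B_i = {x ∈ U_{i-1} \ Q : η x ≥ deg_{U_{i-1}} x}`. -/
def U1 (η : α → ℕ) (Q : Finset α) : ℕ → Finset α
  | 0 => G.VSet
  | i + 1 => (U1 η Q i).filter fun x => x ∈ Q ∨ η x < G.degIn (U1 η Q i) x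

/-- The final unburnt set `U^{(1)}_I` of phase one (the sequence `U1` is decreasing,
hence stabilizes after at most `|α|` steps). -/
def U1lim (η : α → ℕ) (Q : Finset α) : Finset α := G.U1 η Q (Fintype.card α)

/-- Unburnt sets of phase two of the burning algorithm based on `Q`. -/
def U2 (η : α → ℕ) (Q : Finset α) : ℕ → Finset α
  | 0 => G.U1lim η Q
  | i + 1 => (U2 η Q i).filter fun x => η x < G.degIn (U2 η Q i) x

/-- Recurrence in the wired graph `G_W` (note `deg_{G_W}(x) = deg_G(x)` for `x ∈ W`,
and `deg_F` for `F ⊆ W` is the same in `G_W` and `G`). -/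
def WiredRecurrent (W : Finset α) (ξ : α → ℕ) : Prop :=
  (∀ x ∈ W, ξ x < G.deg x) ∧ ∀ F ⊆ W, F.Nonempty → ∃ x ∈ F, G.degIn F x ≤ ξ x

/-- `ξ` is minimal in the wired graph `G_W`. -/
def WiredMinimal (W : Finset α) (ξ : α → ℕ) : Prop :=
  G.WiredRecurrent W ξ ∧ ∀ w ∈ W, ¬(1 ≤ ξ w ∧ G.WiredRecurrent W (SubOne ξ w))

/-- Entry points `E(ξ,W)` of `ξ ∈ R_{G_W}`: vertices burnable at the first step. -/
def entryPoints (W : Finset α) (ξ : α → ℕ) : Finset α :=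
  W.filter fun w => G.degIn W w ≤ ξ w

/-- `x` is burnable given the burnt set `S`: `η(x) ≥ deg_G(x) − ∑_{y ∈ S} b_{xy}`. -/
def Burnable (η : α → ℕ) (S : Finset α) (x : α) : Prop :=
  G.degIn (Finset.univ \ S) x ≤ η x

/-- A burning sequence starting from the burnt set `S`. -/
def IsBurnSeq (η : α → ℕ) : Finset α → List α → Prop
  | _, [] => True
  | S, x :: l => x ∉ S ∧ G.Burnable η S x ∧ IsBurnSeq η (insert x S) l

/-- `B` is a burnt set for `η`: some burning sequence from `{s}` burns exactly `B`. -/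
def IsBurntSet (η : α → ℕ) (B : Finset α) : Prop :=
  ∃ l : List α, G.IsBurnSeq η {G.sink} l ∧ l.toFinset = B

/-- Reachability within the vertex set `S`. -/
def ReachIn (S : Set α) (x y : α) : Prop :=
  Relation.ReflTransGen (fun u v => u ∈ S ∧ v ∈ S ∧ 0 < G.b u v) x y

/-- `C` is a connected component of the subgraph induced on `(V ∪ {s}) \ W`
that does not contain the sink. -/
def IsHoleComp (W C : Finset α) : Prop :=
  C.Nonempty ∧ G.sink ∉ C ∧
    ∀ x ∈ C, ∀ y : α, y ∈ C ↔ y ∉ W ∧ G.ReachIn {a : α | a ∉ W} x y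

/-- Adjacency induced by a finite set `t` of (undirected, indexed) edges. -/
def edgeRel (t : Finset (Sym2 α × ℕ)) (u v : α) : Prop := ∃ k : ℕ, (s(u, v), k) ∈ t

/-- `t` is a spanning tree of the multigraph `G`: it consists of edges of `G`
(parallel edges distinct), it spans (connected), and every edge is a bridge
(equivalently, it is acyclic). -/
def IsSpanningTree (t : Finset (Sym2 α × ℕ)) : Prop :=
  (∀ p ∈ t, ∃ x y : α, p.1 = s(x, y) ∧ p.2 < G.b x y) ∧
  (∀ u v : α, Relation.ReflTransGen (edgeRel t) u v) ∧
  ∀ p ∈ t, ∀ x y : α, p.1 = s(x, y) →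
    ¬ Relation.ReflTransGen (edgeRel (t.erase p)) x y

/-- Adjacency induced by a set of (undirected, indexed) edges. -/
def edgeRelSet (t : Set (Sym2 α × ℕ)) (u v : α) : Prop := ∃ k : ℕ, (s(u, v), k) ∈ t

/-- Set version of `IsSpanningTree`. -/
def IsSpanningTreeSet (t : Set (Sym2 α × ℕ)) : Prop :=
  (∀ p ∈ t, ∃ x y : α, p.1 = s(x, y) ∧ p.2 < G.b x y) ∧
  (∀ u v : α, Relation.ReflTransGen (edgeRelSet t) u v) ∧
  ∀ p ∈ t, ∀ x y : α, p.1 = s(x, y) →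
    ¬ Relation.ReflTransGen (edgeRelSet (t \ {p})) x y

/-- The step at which `x` burns in phase one (0 for the sink; `sInf ∅ = 0` if `x`
never burns in phase one). -/
noncomputable def p1time (η : α → ℕ) (Q : Finset α) (x : α) : ℕ :=
  sInf {i : ℕ | x ∉ G.U1 η Q i}

/-- The step at which `x` burns in phase two. -/
noncomputable def p2time (η : α → ℕ) (Q : Finset α) (x : α) : ℕ :=
  sInf {i : ℕ | x ∉ G.U2 η Q i}

/-- Vertices burnt at step `i` of phase one (`B^{(1)}_0 = {s}`). -/
def B1 (η : α → ℕ) (Q : Finset α) : ℕ → Finset α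
  | 0 => {G.sink}
  | i + 1 => G.U1 η Q i \ G.U1 η Q (i + 1)

/-- Vertices burnt at step `i` of phase two (`B^{(2)}_0` = everything burnt in phase
one, including the sink). -/
def B2 (η : α → ℕ) (Q : Finset α) : ℕ → Finset α
  | 0 => Finset.univ \ G.U1lim η Q
  | i + 1 => G.U2 η Q i \ G.U2 η Q (i + 1)

/-- The set `B^{(p)}_{i-1}` of vertices burnt at the step preceding the step at which
`x` burns (in the appropriate phase). -/
noncomputable def prevBurnt (η : α → ℕ) (Q : Finset α) (x : α) : Finset α :=
  if x ∈ G.U1lim η Q then G.B2 η Q (G.p2time η Q x - 1)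
  else G.B1 η Q (G.p1time η Q x - 1)

/-- The set `D = B^{(p)}_0 ∪ ⋯ ∪ B^{(p)}_{i-1}` of vertices burnt strictly before `x`
in the phase in which `x` burns. -/
noncomputable def burntBefore (η : α → ℕ) (Q : Finset α) (x : α) : Finset α :=
  if x ∈ G.U1lim η Q then Finset.univ \ G.U2 η Q (G.p2time η Q x - 1)
  else Finset.univ \ G.U1 η Q (G.p1time η Q x - 1)

/-- `j = η(x) − deg_G(x) + n_x` with `n_x = ∑_{y ∈ D} b_{xy}`. -/
noncomputable def jX (η : α → ℕ) (Q : Finset α) (x : α) : ℕ :=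
  η x + G.degIn (G.burntBefore η Q x) x - G.deg x

/-- The defining property of the edge `e_x` of the burning bijection based on `Q`:
`e_x` has tail `x`, head burnt at the previous step, and exactly `j` smaller elements
of `P_x` under the given edge order `lt x`. -/
def EdgeSpec (lt : α → G.OEdge → G.OEdge → Prop) (η : α → ℕ) (Q : Finset α)
    (x : α) (e : G.OEdge) : Prop :=
  e.1.1 = x ∧ e.1.2.1 ∈ G.prevBurnt η Q x ∧
    {f : G.OEdge | f.1.1 = x ∧ f.1.2.1 ∈ G.prevBurnt η Q x ∧ lt x f e}.ncard =
      G.jX η Q x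

/-- The (oriented) spanning tree `t(η) = {e_x : x ∈ V}` assigned to `η` by the
burning bijection based on `Q`. -/
def treeOf (lt : α → G.OEdge → G.OEdge → Prop) (η : α → ℕ) (Q : Finset α) :
    Set G.OEdge :=
  {e | ∃ x ∈ G.VSet, G.EdgeSpec lt η Q x e}

/-- Forget the orientation of an oriented edge. -/
def undir (e : G.OEdge) : Sym2 α × ℕ := (s(e.1.1, e.1.2.1), e.1.2.2)

/-- Total burning order: phase-one vertices first (at their phase-one step), then
phase-two vertices. -/
noncomputable def burnOrder (η : α → ℕ) (Q : Finset α) (x : α) : ℕ :=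
  if x ∈ G.U1lim η Q then Fintype.card α + 1 + G.p2time η Q x else G.p1time η Q x

/-- Edge multiplicities of the auxiliary graph `G_W^*` (on vertex set `W ∪ {s}`):
`b*_{xy} = b_{xy}` for `x,y ∈ W`; `b*_{xs} = ∑_{z ∉ W} b_{xz}` for `x ∈ Q` and
`b*_{xs} = 0` for `x ∈ W \ Q`. -/
def bstar (Q W : Finset α) (x y : α) : ℕ :=
  if x ∈ W ∧ y ∈ W then G.b x y
  else if x ∈ W ∧ y = G.sink then
    if x ∈ Q then ∑ z ∈ Finset.univ \ W, G.b x z else 0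
  else if y ∈ W ∧ x = G.sink then
    if y ∈ Q then ∑ z ∈ Finset.univ \ W, G.b z y else 0
  else 0

/-- Recurrence in the auxiliary graph `G_W^*`. -/
def StarRecurrent (Q W : Finset α) (ζ : α → ℕ) : Prop :=
  (∀ x ∈ W, ζ x < ∑ y ∈ insert G.sink W, G.bstar Q W x y) ∧
    ∀ F ⊆ W, F.Nonempty → ∃ x ∈ F, (∑ y ∈ F, G.bstar Q W x y) ≤ ζ x

end Graph

end Sandpile

open Sandpile

namespace Sandpile
namespace Graph

variable {α : Type*} [Fintype α] [DecidableEq α] (G : Graph α)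

/-- Ampleness for every nonempty subset of `S`. -/
def AmpAll (S : Finset α) (η : α → ℕ) : Prop :=
  ∀ F ⊆ S, F.Nonempty → ∃ x ∈ F, G.degIn F x ≤ η x

/-- Phase one burns everything outside `W`, stated through subsets. -/
def PhaseOne (W : Finset α) (η : α → ℕ) : Prop :=
  ∀ F ⊆ G.VSet \ W, F.Nonempty → ∃ x ∈ F, G.degIn (F ∪ W) x ≤ η x

theorem degIn_mono {F F' : Finset α} (h : F ⊆ F') (x : α) : G.degIn F x ≤ G.degIn F' x :=
  Finset.sum_le_sum_of_subset h

theorem exists_order (η : α → ℕ) : ∀ (n : ℕ) (S : Finset α), S.card = n → G.AmpAll S η →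
    ∃ r : α → ℕ, Set.InjOn r S ∧ ∀ x ∈ S, G.degIn (S.filter fun y => r x ≤ r y) x ≤ η x := by
  intro n
  induction n with
  | zero =>
    intro S hS _
    have : S = ∅ := Finset.card_eq_zero.mp hS
    subst this
    exact ⟨fun _ => 0, by simp, by simp⟩
  | succ n ih =>
    intro S hS hA
    have hne : S.Nonempty := by
      rw [← Finset.card_pos]; omega
    obtain ⟨x, hx, hxd⟩ := hA S (Finset.Subset.refl _) hne
    obtain ⟨r, hr, hr2⟩ := ih (S.erase x) (by rw [Finset.card_erase_of_mem hx]; omega)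
      (fun F hF => hA F (hF.trans (Finset.erase_subset _ _)))
    refine ⟨fun y => if y = x then 0 else r y + 1, ?_, ?_⟩
    · intro a ha b hb hab
      by_cases h1 : a = x <;> by_cases h2 : b = x <;> simp [h1, h2] at hab ⊢
      exact hr (by simpa [h1] using ha) (by simpa [h2] using hb) hab
    · intro a ha
      by_cases h1 : a = x
      · subst h1
        exact (G.degIn_mono (Finset.filter_subset _ _) _).trans hxd
      · refine le_trans (G.degIn_mono ?_ _) (hr2 a (by simp [h1, ha]))
        intro y hy
        by_cases h2 : y = x
        · simp [h1, h2] at hy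
        · simpa [h1, h2] using hy

theorem ampAll_of_order (S : Finset α) (η r : α → ℕ)
    (h : ∀ x ∈ S, G.degIn (S.filter fun y => r x ≤ r y) x ≤ η x) : G.AmpAll S η := by
  intro F hF hne
  obtain ⟨x, hx, hmin⟩ := Finset.exists_min_image F r hne
  exact ⟨x, hx, (G.degIn_mono (fun y hy => by simp [hF hy, hmin y hy]) x).trans (h x (hF hx))⟩

theorem sum_order (hs : ∀ x y, G.b x y = G.b y x) (hl : ∀ x, G.b x x = 0)
    (W : Finset α) (r : α → ℕ) (hr : Set.InjOn r W) :
    2 * ∑ x ∈ W, G.degIn (W.filter fun y => r x ≤ r y) x = ∑ x ∈ W, ∑ y ∈ W, G.b x y := by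
  have h1 : ∑ x ∈ W, G.degIn (W.filter fun y => r x ≤ r y) x
      = ∑ x ∈ W, ∑ y ∈ W, if r x ≤ r y then G.b x y else 0 := by
    simp [degIn, Finset.sum_filter]
  have h2 : ∑ x ∈ W, G.degIn (W.filter fun y => r x ≤ r y) x
      = ∑ x ∈ W, ∑ y ∈ W, if r y ≤ r x then G.b x y else 0 := by
    rw [h1, Finset.sum_comm]
    refine Finset.sum_congr rfl fun x _ => Finset.sum_congr rfl fun y _ => ?_
    rw [hs]
  rw [two_mul]
  nth_rewrite 1 [h1]
  rw [h2, ← Finset.sum_add_distrib]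
  refine Finset.sum_congr rfl fun x hx => ?_
  rw [← Finset.sum_add_distrib]
  refine Finset.sum_congr rfl fun y hy => ?_
  by_cases h : x = y
  · subst h; simp [hl]
  · have : r x ≠ r y := fun h' => h (hr hx hy h')
    rcases lt_or_gt_of_ne this with h' | h'
    · simp [h'.le, h'.not_ge]
    · simp [h'.le, h'.not_ge]

theorem phaseOne_congr {W : Finset α} {η η' : α → ℕ} (h : ∀ x ∉ W, η x = η' x)
    (hP : G.PhaseOne W η) : G.PhaseOne W η' := by
  intro F hF hne
  obtain ⟨x, hx, hd⟩ := hP F hF hne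
  exact ⟨x, hx, by rw [← h x (Finset.mem_sdiff.mp (hF hx)).2]; exact hd⟩

theorem ampAll_congr {W : Finset α} {η η' : α → ℕ} (h : ∀ x ∈ W, η x = η' x)
    (hP : G.AmpAll W η) : G.AmpAll W η' := by
  intro F hF hne
  obtain ⟨x, hx, hd⟩ := hP F hF hne
  exact ⟨x, hx, by rw [← h x (hF hx)]; exact hd⟩

theorem recurrent_of_phaseOne {W : Finset α} {η : α → ℕ} (hst : G.Stable η)
    (hP : G.PhaseOne W η) (hA : G.AmpAll W η) : G.Recurrent η := by
  refine ⟨hst, fun F hF hne => ?_⟩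
  by_cases h : (F \ W).Nonempty
  · obtain ⟨x, hx, hd⟩ := hP (F \ W) (Finset.sdiff_subset_sdiff hF (Finset.Subset.refl _)) h
    refine ⟨x, (Finset.mem_sdiff.mp hx).1, (G.degIn_mono ?_ x).trans hd⟩
    intro y hy; by_cases hyW : y ∈ W <;> simp [hy, hyW]
  · rw [Finset.not_nonempty_iff_eq_empty, Finset.sdiff_eq_empty_iff_subset] at h
    exact hA F h hne

theorem U1lim_eq_iff {W : Finset α} (hWs : G.sink ∉ W) (η : α → ℕ) :
    G.U1lim η W = W ↔ G.PhaseOne W η := by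
  have hWV : W ⊆ G.VSet := fun x hx => by
    simp only [VSet, Finset.mem_erase, Finset.mem_univ, and_true]
    rintro rfl; exact hWs hx
  have hWU : ∀ i, W ⊆ G.U1 η W i := by
    intro i
    induction i with
    | zero => exact hWV
    | succ i ih => intro x hx; simp [U1, ih hx, hx]
  have hUV : ∀ i, G.U1 η W i ⊆ G.VSet := by
    intro i
    induction i with
    | zero => exact Finset.Subset.refl _
    | succ i ih => exact (Finset.filter_subset _ _).trans ih
  constructor
  · intro h F hF hne
    by_contra hcon
    push Not at hcon
    have key : ∀ i, F ∪ W ⊆ G.U1 η W i := by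
      intro i
      induction i with
      | zero => exact Finset.union_subset (hF.trans Finset.sdiff_subset) hWV
      | succ i ih =>
        intro x hx
        simp only [U1, Finset.mem_filter]
        refine ⟨ih hx, ?_⟩
        rcases Finset.mem_union.mp hx with hx | hx
        · exact Or.inr ((hcon x hx).trans_le (G.degIn_mono ih x))
        · exact Or.inl hx
    obtain ⟨x, hx⟩ := hne
    have := key (Fintype.card α) (Finset.mem_union_left _ hx)
    change x ∈ G.U1lim η W at this
    rw [h] at this
    exact (Finset.mem_sdiff.mp (hF hx)).2 this
  · intro hP
    have key : ∀ i, (G.U1 η W i \ W).card ≤ Fintype.card α - i := by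
      intro i
      induction i with
      | zero => simpa using Finset.card_le_univ _
      | succ i ih =>
        by_cases hne : (G.U1 η W i \ W).Nonempty
        · obtain ⟨x, hx, hd⟩ := hP _ (Finset.sdiff_subset_sdiff (hUV i) (Finset.Subset.refl _)) hne
          rw [Finset.sdiff_union_of_subset (hWU i)] at hd
          have : (G.U1 η W (i + 1) \ W) ⊂ (G.U1 η W i \ W) := by
            refine Finset.ssubset_iff_subset_ne.mpr
              ⟨Finset.sdiff_subset_sdiff (Finset.filter_subset _ _) (Finset.Subset.refl _), ?_⟩
            intro heq
            rw [← heq] at hx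
            have h1 := Finset.mem_sdiff.mp hx
            have h2 := h1.1
            simp only [U1, Finset.mem_filter] at h2
            rcases h2.2 with h3 | h3
            · exact h1.2 h3
            · omega
          have := Finset.card_lt_card this
          omega
        · rw [Finset.not_nonempty_iff_eq_empty, Finset.sdiff_eq_empty_iff_subset] at hne
          have : G.U1 η W (i + 1) \ W = ∅ :=
            Finset.sdiff_eq_empty_iff_subset.mpr ((Finset.filter_subset _ _).trans hne)
          simp [this]
    have h := key (Fintype.card α)
    rw [Nat.sub_self, Nat.le_zero, Finset.card_eq_zero, Finset.sdiff_eq_empty_iff_subset] at h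
    exact Finset.Subset.antisymm h (hWU _)

theorem exists_exit {W : Finset α} (hWs : G.sink ∉ W)
    (hconn : G.ConnectedOn {x : α | x ∉ W}) (F : Finset α) (hF : F ⊆ G.VSet \ W)
    (hne : F.Nonempty) : ∃ x ∈ F, ∃ z, z ∉ F ∧ z ∉ W ∧ 0 < G.b x z := by
  by_contra hcon
  push Not at hcon
  obtain ⟨x, hx⟩ := hne
  have hp := hconn x (Finset.mem_sdiff.mp (hF hx)).2 G.sink hWs
  have : G.sink ∈ F := by
    generalize G.sink = t at hp
    induction hp with
    | refl => exact hx
    | tail _ h2 ih =>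
      by_contra h3
      have := hcon _ ih _ h3 h2.2.1
      have := h2.2.2
      omega
  have := Finset.mem_sdiff.mp (hF this)
  simp [VSet] at this

theorem phaseOne_of_minimal (hG : G.IsSandpileGraph) {W : Finset α} (hWs : G.sink ∉ W)
    (hconn : G.ConnectedOn {x : α | x ∉ W}) (ξ : α → ℕ)
    (hstable : ∀ x ∈ W, ξ x < G.deg x) (hA : G.AmpAll W ξ) (hmin : G.Minimal W ξ)
    (η : α → ℕ) (hη : G.Recurrent η) (hηξ : EqOn η ξ W) : G.PhaseOne W η := by
  obtain ⟨hs, hl, _⟩ := hG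
  have hWV : W ⊆ G.VSet := fun x hx => by
    simp only [VSet, Finset.mem_erase, Finset.mem_univ, and_true]
    rintro rfl; exact hWs hx
  -- the maximal extension
  set η0 : α → ℕ := fun x => if x ∈ W then ξ x else G.deg x - 1 with hη0
  have hin : ∀ x ∈ W, η0 x = ξ x := fun x hx => by simp [hη0, hx]
  have hexit : ∀ F ⊆ G.VSet \ W, F.Nonempty → ∃ x ∈ F, G.degIn (F ∪ W) x + 1 ≤ G.deg x := by
    intro F hF hne
    obtain ⟨x, hx, z, hzF, hzW, hz⟩ := G.exists_exit hWs hconn F hF hne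
    refine ⟨x, hx, ?_⟩
    have h1 : G.degIn (insert z (F ∪ W)) x ≤ G.deg x := G.degIn_mono (Finset.subset_univ _) x
    rw [degIn, Finset.sum_insert (by simp [hzF, hzW])] at h1
    rw [degIn]; omega
  have hP0 : G.PhaseOne W η0 := by
    intro F hF hne
    obtain ⟨x, hx, h⟩ := hexit F hF hne
    have := (Finset.mem_sdiff.mp (hF hx)).2
    refine ⟨x, hx, ?_⟩
    simp only [hη0, this, if_false]
    omega
  have hst0 : G.Stable η0 := by
    intro x hx
    by_cases hxW : x ∈ W
    · rw [hin x hxW]; exact hstable x hxW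
    · obtain ⟨y, hy, h⟩ := hexit {x} (by simp [hx, hxW]) (by simp)
      rw [Finset.mem_singleton] at hy
      subst hy
      simp only [hη0, hxW, if_false]
      omega
  have hrec0 : G.Recurrent η0 :=
    G.recurrent_of_phaseOne hst0 hP0 (G.ampAll_congr (fun x hx => (hin x hx).symm) hA)
  have hnot : ∀ w ∈ W, 1 ≤ ξ w → ¬ G.AmpAll W (SubOne ξ w) := by
    intro w hw h1 hAmp
    refine hmin.2 η0 hrec0 hin w hw ⟨by rw [hin w hw]; exact h1, ?_⟩
    refine G.recurrent_of_phaseOne (W := W) ?_ ?_ ?_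
    · intro x hx
      have := hst0 x hx
      simp only [SubOne]; split_ifs <;> omega
    · refine G.phaseOne_congr (fun x hx => ?_) hP0
      have : x ≠ w := fun h => hx (h ▸ hw)
      simp [SubOne, this]
    · refine G.ampAll_congr (fun x hx => ?_) hAmp
      simp [SubOne, hin x hx]
  -- exactness of the wired burning order
  obtain ⟨r, hr, hr2⟩ := G.exists_order ξ _ W rfl hA
  have hexact : ∀ w ∈ W, ξ w = G.degIn (W.filter fun y => r w ≤ r y) w := by
    intro w hw
    by_contra hne
    have h1 := hr2 w hw
    refine hnot w hw (by omega) (G.ampAll_of_order W _ r fun x hx => ?_)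
    have h2 := hr2 x hx
    simp only [SubOne]
    split_ifs with h
    · subst h; omega
    · exact h2
  have hsum : 2 * ∑ w ∈ W, ξ w = ∑ x ∈ W, ∑ y ∈ W, G.b x y := by
    rw [← G.sum_order hs hl W r hr, Finset.sum_congr rfl hexact]
  obtain ⟨ρ, hρ, hρ2⟩ := G.exists_order η _ G.VSet rfl hη.2
  have hsum2 := G.sum_order hs hl W ρ (hρ.mono (by exact_mod_cast hWV))
  have hle1 : ∀ w ∈ W, G.degIn (W.filter fun y => ρ w ≤ ρ y) w
      ≤ G.degIn (G.VSet.filter fun y => ρ w ≤ ρ y) w := fun w _ =>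
    G.degIn_mono (Finset.filter_subset_filter _ hWV) w
  have hle2 : ∀ w ∈ W, G.degIn (G.VSet.filter fun y => ρ w ≤ ρ y) w ≤ ξ w := fun w hw => by
    rw [← hηξ w hw]; exact hρ2 w (hWV hw)
  have heq : ∀ w ∈ W, G.degIn (W.filter fun y => ρ w ≤ ρ y) w = ξ w :=
    (Finset.sum_eq_sum_iff_of_le fun w hw => (hle1 w hw).trans (hle2 w hw)).mp (by omega)
  have hzero : ∀ w ∈ W, ∀ y ∈ G.VSet, y ∉ W → ρ w ≤ ρ y → G.b w y = 0 := by
    intro w hw y hy hyW hwy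
    have h1 : G.degIn (insert y (W.filter fun y => ρ w ≤ ρ y)) w
        ≤ G.degIn (G.VSet.filter fun y => ρ w ≤ ρ y) w := by
      refine G.degIn_mono ?_ w
      intro z hz
      rcases Finset.mem_insert.mp hz with rfl | hz
      · simp [hy, hwy]
      · exact Finset.filter_subset_filter _ hWV hz
    have h2 := hle2 w hw
    have h3 := heq w hw
    rw [degIn, Finset.sum_insert (by simp [hyW])] at h1
    rw [degIn] at h3
    omega
  intro F hF hne
  obtain ⟨x, hx, hminx⟩ := Finset.exists_min_image F ρ hne
  have hxm := Finset.mem_sdiff.mp (hF hx)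
  refine ⟨x, hx, le_trans ?_ (hρ2 x hxm.1)⟩
  refine Finset.sum_le_sum_of_ne_zero fun y hy hb => ?_
  rcases Finset.mem_union.mp hy with hy | hy
  · simp [(Finset.mem_sdiff.mp (hF hy)).1, hminx y hy]
  · rw [Finset.mem_filter]
    refine ⟨hWV hy, ?_⟩
    by_contra hlt
    exact hb (by rw [hs]; exact hzero y hy x hxm.1 hxm.2 (by omega))

end Graph
end Sandpile

/-- For a minimal configuration `ξ` on `W`:
`ν_G[η_W = ξ] = ν_G[E_{V,W}] ⋅ |R_{G_W}|⁻¹`, stated as the equivalent counting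
identity `|R_{G_W}| ⋅ #{η ∈ R_G : η_W = ξ} = #{η ∈ R_G : η ∈ E_{V,W}}`. -/
theorem statement_18 {α : Type*} [Fintype α] [DecidableEq α] (G : Sandpile.Graph α)
    (hG : G.IsSandpileGraph) (W : Finset α) (hWne : W.Nonempty) (hWs : G.sink ∉ W)
    (hconn : G.ConnectedOn {x : α | x ∉ W}) (ξ : α → ℕ)
    (hstable : ∀ x ∈ W, ξ x < G.deg x) (hmin : G.Minimal W ξ) :
    Nat.card {ζ : α → ℕ // (∀ x, x ∉ W → ζ x = 0) ∧ G.WiredRecurrent W ζ} *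
        Nat.card {η : α → ℕ // η G.sink = 0 ∧ G.Recurrent η ∧ Graph.EqOn η ξ W} =
      Nat.card {η : α → ℕ // η G.sink = 0 ∧ G.Recurrent η ∧ G.U1lim η W = W} := by
  have hA : G.AmpAll W ξ := by
    obtain ⟨⟨η, hη, he⟩, _⟩ := hmin
    refine G.ampAll_congr he fun F hF hne => hη.2 F (fun x hx => ?_) hne
    simp only [Graph.VSet, Finset.mem_erase, Finset.mem_univ, and_true]
    rintro rfl; exact hWs (hF hx)
  have hWV : W ⊆ G.VSet := fun x hx => by
    simp only [Graph.VSet, Finset.mem_erase, Finset.mem_univ, and_true]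
    rintro rfl; exact hWs hx
  have hPm := G.phaseOne_of_minimal hG hWs hconn ξ hstable hA hmin
  rw [← Nat.card_prod]
  refine Nat.card_congr ⟨fun p => ⟨fun x => if x ∈ W then p.1.1 x else p.2.1 x, ?_⟩,
    fun η => (⟨fun x => if x ∈ W then η.1 x else 0, ?_⟩,
      ⟨fun x => if x ∈ W then ξ x else η.1 x, ?_⟩), ?_, ?_⟩
  · obtain ⟨⟨ζ, hζ0, hζs, hζA⟩, ⟨η, hη0, hηr, hηe⟩⟩ := p
    have hP : G.PhaseOne W (fun x => if x ∈ W then ζ x else η x) :=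
      G.phaseOne_congr (fun x hx => by simp [hx]) (hPm η hηr hηe)
    refine ⟨by simp [hWs, hη0], G.recurrent_of_phaseOne (fun x hx => ?_) hP ?_,
      (G.U1lim_eq_iff hWs _).mpr hP⟩
    · by_cases h : x ∈ W
      · simpa [h] using hζs x h
      · simpa [h] using hηr.1 x hx
    · exact G.ampAll_congr (fun x hx => by simp [hx]) hζA
  · obtain ⟨η, hη0, hηr, hηU⟩ := η
    refine ⟨fun x hx => by simp [hx], fun x hx => by simpa [hx] using hηr.1 x (hWV hx), ?_⟩
    exact G.ampAll_congr (W := W) (η := η) (fun x hx => by simp [hx])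
      (fun F hF => hηr.2 F (hF.trans hWV))
  · obtain ⟨η, hη0, hηr, hηU⟩ := η
    have hP : G.PhaseOne W (fun x => if x ∈ W then ξ x else η x) :=
      G.phaseOne_congr (fun x hx => by simp [hx]) ((G.U1lim_eq_iff hWs _).mp hηU)
    refine ⟨by simp [hWs, hη0], G.recurrent_of_phaseOne (fun x hx => ?_) hP ?_,
      fun x hx => by simp [hx]⟩
    · by_cases h : x ∈ W
      · simpa [h] using hstable x h
      · simpa [h] using hηr.1 x hx
    · exact G.ampAll_congr (fun x hx => by simp [hx]) hA
  · rintro ⟨⟨ζ, hζ0, hζs, hζA⟩, ⟨η, hη0, hηr, hηe⟩⟩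
    refine Prod.ext (Subtype.ext (funext fun x => ?_)) (Subtype.ext (funext fun x => ?_))
    · by_cases h : x ∈ W
      · simp [h]
      · simp [h, hζ0 x h]
    · by_cases h : x ∈ W
      · simp [h, hηe x h]
      · simp [h]
  · rintro ⟨η, hη⟩
    refine Subtype.ext (funext fun x => ?_)
    by_cases h : x ∈ W <;> simp [h]
end

section
/- Let G = (V ∪ {s}, E) be a finite sandpile graph, Q ⊆ V, and for η ∈ R_G let W_0(η) = U^{(1)}_I be the set of vertices left unburnt by phase one of burning based on Q (so W_0(η) ⊇ Q). For Q ⊆ W ⊆ V, let G_W^* be the auxiliary sandpile graph on W ∪ {s} with multiplicities b*_{xy} = b_{xy} for x,y ∈ W, b*_{xs} = Σ_{z ∈ (V∪{s})\W} b_{xz} for x ∈ Q, and b*_{xs} = 0 for x ∈ W \ Q. Then for every η ∈ R_G: W_0(η) = W if and only if η ∈ E_{V,W} and η_W ∈ R_{G_W^*} (recurrence in G_W^* meaning: η_W (x) < deg_{G_W^*}(x) for all x ∈ W and η_W is ample in G_W^* for every nonempty F ⊆ W). -/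
open scoped Classical

open Sandpile

namespace Sandpile.Graph

theorem degIn_mono' {α : Type*} [Fintype α] [DecidableEq α] (G : Graph α)
    {A B : Finset α} (h : A ⊆ B) (x : α) : G.degIn A x ≤ G.degIn B x :=
  Finset.sum_le_sum_of_subset h

theorem U1_stab {α : Type*} [Fintype α] [DecidableEq α] (G : Graph α)
    (η : α → ℕ) (Q : Finset α) (n : ℕ) :
    G.U1 η Q (n + 1) = G.U1 η Q n ∨ (G.U1 η Q n).card + n ≤ G.VSet.card := by
  induction n with
  | zero => right; simp [U1]
  | succ n ih =>
    rcases ih with h | h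
    · left
      rw [U1, h]
      rw [U1] at h
      exact h
    · by_cases h' : G.U1 η Q (n + 1) = G.U1 η Q n
      · left
        rw [U1, h']
        rw [U1] at h'
        exact h'
      · right
        have hs : G.U1 η Q (n + 1) ⊆ G.U1 η Q n := by
          rw [U1]; exact Finset.filter_subset _ _
        have := Finset.card_lt_card (Finset.ssubset_iff_subset_ne.2 ⟨hs, h'⟩)
        omega

theorem U1lim_spec {α : Type*} [Fintype α] [DecidableEq α] (G : Graph α)
    (η : α → ℕ) (Q : Finset α) {x : α} (hx : x ∈ G.U1lim η Q) (hQ : x ∉ Q) :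
    η x < G.degIn (G.U1lim η Q) x := by
  rcases G.U1_stab η Q (Fintype.card α) with h | h
  · unfold U1lim at hx ⊢
    have hx' := hx
    rw [← h, U1, Finset.mem_filter] at hx'
    exact hx'.2.resolve_left hQ
  · have : G.VSet.card < Fintype.card α := by
      unfold VSet
      exact Finset.card_erase_lt_of_mem (Finset.mem_univ _)
    omega

theorem U1_subset_VSet {α : Type*} [Fintype α] [DecidableEq α] (G : Graph α)
    (η : α → ℕ) (Q : Finset α) (n : ℕ) : G.U1 η Q n ⊆ G.VSet := by
  induction n with
  | zero => exact Finset.Subset.refl _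
  | succ n ih => rw [U1]; exact (Finset.filter_subset _ _).trans ih

theorem subset_U1lim {α : Type*} [Fintype α] [DecidableEq α] (G : Graph α)
    (η : α → ℕ) (Q A : Finset α) (hA : A ⊆ G.VSet)
    (h : ∀ x ∈ A, x ∉ Q → η x < G.degIn A x) : A ⊆ G.U1lim η Q := by
  unfold U1lim
  generalize Fintype.card α = n
  induction n with
  | zero => exact hA
  | succ n ih =>
    intro x hx
    rw [U1, Finset.mem_filter]
    refine ⟨ih hx, ?_⟩
    by_cases hq : x ∈ Q
    · exact Or.inl hq
    · exact Or.inr ((h x hx hq).trans_le (G.degIn_mono' ih x))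

theorem bstar_sum {α : Type*} [Fintype α] [DecidableEq α] (G : Graph α)
    (Q W F : Finset α) (hF : F ⊆ W) {x : α} (hx : x ∈ W) :
    ∑ y ∈ F, G.bstar Q W x y = G.degIn F x := by
  unfold degIn
  refine Finset.sum_congr rfl fun y hy => ?_
  simp [bstar, hx, hF hy]

theorem bstar_deg {α : Type*} [Fintype α] [DecidableEq α] (G : Graph α)
    (Q W : Finset α) (hW : W ⊆ G.VSet) {x : α} (hx : x ∈ W) :
    ∑ y ∈ insert G.sink W, G.bstar Q W x y =
      if x ∈ Q then G.deg x else G.degIn W x := by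
  have hs : G.sink ∉ W := fun h => by simpa [VSet] using hW h
  rw [Finset.sum_insert hs, G.bstar_sum Q W W (Finset.Subset.refl _) hx]
  by_cases hq : x ∈ Q
  · simp only [bstar, hx, hs, hq, and_false, if_true, if_false, and_true]
    exact Finset.sum_sdiff (Finset.subset_univ W)
  · simp [bstar, hx, hs, hq]

end Sandpile.Graph

/-- For `η ∈ R_G` and `Q ⊆ W ⊆ V`: the set `W₀(η)` of vertices left
unburnt by phase one of burning based on `Q` equals `W` if and only if `η ∈ E_{V,W}`
and the restriction `η_W` is recurrent in the auxiliary graph `G_W^*`. -/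
theorem statement_19 {α : Type*} [Fintype α] [DecidableEq α] (G : Sandpile.Graph α)
    (hG : G.IsSandpileGraph) (Q W : Finset α) (hQW : Q ⊆ W) (hW : W ⊆ G.VSet) :
    ∀ η : α → ℕ, G.Recurrent η →
      (G.U1lim η Q = W ↔ (G.U1lim η W = W ∧ G.StarRecurrent Q W η)) := by
  intro η hη
  constructor
  · intro h
    have key : ∀ x ∈ W, x ∉ Q → η x < G.degIn W x := by
      intro x hx hq
      have := G.U1lim_spec η Q (x := x) (by rw [h]; exact hx) hq
      rwa [h] at this
    have hsub : W ⊆ G.U1lim η W :=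
      G.subset_U1lim η W W hW (fun x hx hn => absurd hx hn)
    refine ⟨Finset.Subset.antisymm ?_ hsub, ?_, ?_⟩
    · have : G.U1lim η W ⊆ G.U1lim η Q := by
        refine G.subset_U1lim η Q _ (G.U1_subset_VSet η W _) fun x hx hq => ?_
        by_cases hw : x ∈ W
        · exact (key x hw hq).trans_le (G.degIn_mono' hsub x)
        · exact G.U1lim_spec η W hx hw
      rwa [h] at this
    · intro x hx
      rw [G.bstar_deg Q W hW hx]
      split_ifs with hq
      · exact hη.1 x (hW hx)
      · exact key x hx hq
    · intro F hF hne
      obtain ⟨x, hx, hle⟩ := hη.2 F (hF.trans hW) hne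
      exact ⟨x, hx, by rwa [G.bstar_sum Q W F hF (hF hx)]⟩
  · rintro ⟨h, hst, -⟩
    refine Finset.Subset.antisymm ?_ ?_
    · have : G.U1lim η Q ⊆ G.U1lim η W :=
        G.subset_U1lim η W _ (G.U1_subset_VSet η Q _) fun x hx hw =>
          G.U1lim_spec η Q hx (fun hq => hw (hQW hq))
      rwa [h] at this
    · refine G.subset_U1lim η Q W hW fun x hx hq => ?_
      have := hst x hx
      rwa [G.bstar_deg Q W hW hx, if_neg hq] at this
end
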